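/- For every constant ε > 0 there exist a constant c > 0 and a threshold k₀ such that the following holds for all integers k ≥ k₀ and U with U ≥ k^{1+ε}: there exists a set X of exactly k positive integers with X ⊆ {1, …, U} satisfying Σ_{x ∈ X} Σ_{y ∈ X} 1/H(x/y) ≥ k · exp( c · √( min( log k / log log k, log U / (log log U)² ) ) ). -/

import Mathlib

/-- The height of a nonzero rational `q = a/b` in lowest terms is `max |a| |b|`. -/
def ratHeight (q : ℚ) : ℕ := max q.num.natAbs q.den

/-!
Let `X` consist of the products of `r` distinct primes chosen from `n` primes that are at most
`2 ^ t`. Exchanging `j` of the `r` prime factors of `x ∈ X` produces `y ∈ X` with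
`H(x/y) ≤ 2 ^ (t * j)`, and there are `C(r, j) * C(n - r, j) ≥ (r * (n - r) / j ^ 2) ^ j` ways to
do so. By Chebyshev's bound `2 ^ t` can be taken of size about `t * n`, so that `j` of order
`√(r / t)` yields a contribution of at least `4 ^ j` from each `x`.

The largest `n` with `C(n, r) ≤ k` satisfies `k ≤ 2 * C(n, r)`, so completing `X` to a set of
exactly `k` elements in an arbitrary way costs only a factor `2`. With `K = log k` and `L = log U`,
the elements of `X` are at most `U` once `r` is a small multiple of `min(K, L / log L)`, and for
this choice `r / t` is at least a constant times `min(K / log K, L / (log L) ^ 2)`.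
-/

section Height

open Finset

lemma ratHeight_pos (q : ℚ) : 0 < ratHeight q :=
  q.den_pos.trans_le (le_max_right _ _)

lemma ratHeight_natCast_div_natCast_le {a b : ℕ} (ha : 0 < a) (hb : 0 < b) :
    ratHeight ((a : ℚ) / b) ≤ max a b := by
  have hdiv : (a : ℚ) / b = Rat.divInt a b := by simp [Rat.divInt_eq_div]
  have hnum : (Rat.divInt a b).num ∣ a := Rat.num_dvd a (mod_cast hb.ne')
  have hden : ((Rat.divInt a b).den : ℤ) ∣ b := Rat.den_dvd a b
  rw [hdiv]
  exact max_le_max (Nat.le_of_dvd ha (Int.natAbs_dvd_natAbs.mpr hnum))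
    (Nat.le_of_dvd hb (Int.natCast_dvd_natCast.mp hden))

lemma ratHeight_prod_div_prod_le {P j : ℕ} {A B : Finset ℕ} (hA : ∀ p ∈ A, 0 < p ∧ p ≤ P)
    (hB : ∀ p ∈ B, 0 < p ∧ p ≤ P) (hAB : #(A \ B) = j) (hBA : #(B \ A) = j) :
    ratHeight (((∏ p ∈ A, p : ℕ) : ℚ) / ((∏ p ∈ B, p : ℕ) : ℚ)) ≤ P ^ j := by
  have hcommon : ((∏ p ∈ A ∩ B, p : ℕ) : ℚ) ≠ 0 :=
    mod_cast (prod_pos fun p hp => (hA p (inter_subset_left hp)).1).ne'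
  have hcancel : ((∏ p ∈ A, p : ℕ) : ℚ) / ((∏ p ∈ B, p : ℕ) : ℚ) =
      ((∏ p ∈ A \ B, p : ℕ) : ℚ) / ((∏ p ∈ B \ A, p : ℕ) : ℚ) := by
    rw [← prod_inter_mul_prod_sdiff A B, ← prod_inter_mul_prod_sdiff B A, inter_comm B A,
      Nat.cast_mul, Nat.cast_mul, mul_div_mul_left _ _ hcommon]
  have hAle : ∏ p ∈ A \ B, p ≤ P ^ j :=
    hAB ▸ prod_le_pow_card _ _ _ fun p hp => (hA p (sdiff_subset hp)).2
  have hBle : ∏ p ∈ B \ A, p ≤ P ^ j :=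
    hBA ▸ prod_le_pow_card _ _ _ fun p hp => (hB p (sdiff_subset hp)).2
  rw [hcancel]
  exact (ratHeight_natCast_div_natCast_le (prod_pos fun p hp => (hA p (sdiff_subset hp)).1)
    (prod_pos fun p hp => (hB p (sdiff_subset hp)).1)).trans (max_le hAle hBle)

/-- The sum of `1 / H(x/y)` over all ordered pairs of elements of `X`, diagonal included. -/
noncomputable def inverseHeightSum (X : Finset ℕ) : ℝ :=
  ∑ x ∈ X, ∑ y ∈ X, (1 : ℝ) / (ratHeight ((x : ℚ) / (y : ℚ)) : ℝ)

lemma inverseHeightSum_mono {X Y : Finset ℕ} (hXY : X ⊆ Y) :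
    inverseHeightSum X ≤ inverseHeightSum Y :=
  calc inverseHeightSum X
      ≤ ∑ x ∈ X, ∑ y ∈ Y, (1 : ℝ) / (ratHeight ((x : ℚ) / (y : ℚ)) : ℝ) :=
        sum_le_sum fun _ _ => sum_le_sum_of_subset_of_nonneg hXY fun _ _ _ => by positivity
    _ ≤ inverseHeightSum Y :=
        sum_le_sum_of_subset_of_nonneg hXY fun _ _ _ => sum_nonneg fun _ _ => by positivity

end Height

section Exchange

open Finset

lemma card_filter_powersetCard_card_sdiff_eq {α : Type*} [DecidableEq α] {Q A : Finset α}
    (hAQ : A ⊆ Q) (j : ℕ) :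
    #{B ∈ Q.powersetCard #A | #(A \ B) = j} = (#A).choose j * (#Q - #A).choose j := by
  rw [← card_sdiff_of_subset hAQ, ← card_powersetCard j A, ← card_powersetCard j (Q \ A),
    ← card_product]
  refine card_nbij' (fun B => (A \ B, B \ A)) (fun z => A \ z.1 ∪ z.2) ?_ ?_ ?_ ?_
  · intro B hB
    simp only [mem_coe, mem_filter, mem_powersetCard] at hB
    obtain ⟨⟨hBQ, hBcard⟩, hj⟩ := hB
    simp only [coe_product, Set.mem_prod, mem_coe, mem_powersetCard]
    exact ⟨⟨sdiff_subset, hj⟩, sdiff_subset_sdiff hBQ subset_rfl,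
      (card_sdiff_comm hBcard).trans hj⟩
  · rintro ⟨C, D⟩ hz
    simp only [coe_product, Set.mem_prod, mem_coe, mem_powersetCard] at hz
    obtain ⟨⟨hCA, hC⟩, hDQ, hD⟩ := hz
    have hdisj : Disjoint (A \ C) D :=
      (disjoint_sdiff.mono_right hDQ).mono_left sdiff_subset
    have hsdiff : A \ (A \ C ∪ D) = C := by grind
    simp only [mem_coe, mem_filter, mem_powersetCard, hsdiff, hC, and_true]
    refine ⟨union_subset (sdiff_subset.trans hAQ) (hDQ.trans sdiff_subset), ?_⟩
    rw [card_union_of_disjoint hdisj, card_sdiff_of_subset hCA, hC, hD]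
    exact Nat.sub_add_cancel (hC ▸ card_le_card hCA)
  · exact fun B _ => by grind
  · rintro ⟨C, D⟩ hz
    simp only [coe_product, Set.mem_prod, mem_coe, mem_powersetCard] at hz
    exact Prod.ext (by grind) (by grind)

lemma choose_mul_choose_div_pow_le_sum_one_div_ratHeight {P : ℕ} {Q A : Finset ℕ}
    (hQ : ∀ p ∈ Q, 0 < p ∧ p ≤ P) (hAQ : A ⊆ Q) (j : ℕ) :
    ((#A).choose j * (#Q - #A).choose j : ℝ) / (P : ℝ) ^ j ≤
      ∑ B ∈ Q.powersetCard #A,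
        (1 : ℝ) / (ratHeight (((∏ p ∈ A, p : ℕ) : ℚ) / ((∏ p ∈ B, p : ℕ) : ℚ)) : ℝ) := by
  have hterm : ∀ B ∈ {B ∈ Q.powersetCard #A | #(A \ B) = j}, (1 : ℝ) / (P : ℝ) ^ j ≤
      1 / (ratHeight (((∏ p ∈ A, p : ℕ) : ℚ) / ((∏ p ∈ B, p : ℕ) : ℚ)) : ℝ) := by
    intro B hB
    obtain ⟨hBQ, hj⟩ := mem_filter.mp hB
    obtain ⟨hBQ, hBcard⟩ := mem_powersetCard.mp hBQ
    refine one_div_le_one_div_of_le (mod_cast ratHeight_pos _) ?_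
    exact_mod_cast ratHeight_prod_div_prod_le (fun p hp => hQ p (hAQ hp))
      (fun p hp => hQ p (hBQ hp)) hj ((card_sdiff_comm hBcard).trans hj)
  calc ((#A).choose j * (#Q - #A).choose j : ℝ) / (P : ℝ) ^ j
      = #{B ∈ Q.powersetCard #A | #(A \ B) = j} • ((1 : ℝ) / (P : ℝ) ^ j) := by
        rw [card_filter_powersetCard_card_sdiff_eq hAQ, nsmul_eq_mul, mul_one_div, Nat.cast_mul]
    _ ≤ ∑ B ∈ Q.powersetCard #A with #(A \ B) = j,
          (1 : ℝ) / (ratHeight (((∏ p ∈ A, p : ℕ) : ℚ) / ((∏ p ∈ B, p : ℕ) : ℚ)) : ℝ) :=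
        card_nsmul_le_sum _ _ _ hterm
    _ ≤ _ := sum_le_sum_of_subset_of_nonneg (filter_subset _ _) fun _ _ _ => by positivity

end Exchange

section SubsetProducts

open Finset

/-- The products of `r` distinct elements of `Q`; for `Q` a set of primes, this is the extremal
set of the construction before it is completed to the prescribed cardinality. -/
def subsetProducts (Q : Finset ℕ) (r : ℕ) : Finset ℕ :=
  (Q.powersetCard r).image fun A => ∏ p ∈ A, p

variable {Q : Finset ℕ} {P r : ℕ}

lemma injOn_prod_powersetCard (hQ : ∀ p ∈ Q, p.Prime) :
    Set.InjOn (fun A : Finset ℕ => ∏ p ∈ A, p) (Q.powersetCard r) := by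
  have hfactors : ∀ A ∈ Q.powersetCard r, (∏ p ∈ A, p).primeFactors = A := fun A hA =>
    Nat.primeFactors_prod fun p hp => hQ p ((mem_powersetCard.mp hA).1 hp)
  intro A hA B hB hAB
  rw [← hfactors A hA, ← hfactors B hB]
  exact congrArg Nat.primeFactors hAB

lemma card_subsetProducts (hQ : ∀ p ∈ Q, p.Prime) : #(subsetProducts Q r) = (#Q).choose r := by
  rw [subsetProducts, card_image_of_injOn (injOn_prod_powersetCard hQ), card_powersetCard]

lemma subsetProducts_subset_Icc (hQ : ∀ p ∈ Q, 0 < p ∧ p ≤ P) :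
    subsetProducts Q r ⊆ Icc 1 (P ^ r) := by
  refine image_subset_iff.mpr fun A hA => ?_
  obtain ⟨hAQ, hAcard⟩ := mem_powersetCard.mp hA
  exact mem_Icc.mpr ⟨prod_pos fun p hp => (hQ p (hAQ hp)).1,
    hAcard ▸ prod_le_pow_card _ _ _ fun p hp => (hQ p (hAQ hp)).2⟩

lemma le_inverseHeightSum_subsetProducts (hQ : ∀ p ∈ Q, p.Prime ∧ p ≤ P) (j : ℕ) :
    (#Q).choose r * ((r.choose j * (#Q - r).choose j : ℝ) / (P : ℝ) ^ j) ≤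
      inverseHeightSum (subsetProducts Q r) := by
  have hprime : ∀ p ∈ Q, p.Prime := fun p hp => (hQ p hp).1
  rw [← card_subsetProducts (r := r) hprime, ← nsmul_eq_mul]
  refine card_nsmul_le_sum _ _ _ fun x hx => ?_
  obtain ⟨A, hA, rfl⟩ := mem_image.mp hx
  obtain ⟨hAQ, rfl⟩ := mem_powersetCard.mp hA
  rw [subsetProducts, sum_image (injOn_prod_powersetCard hprime)]
  exact choose_mul_choose_div_pow_le_sum_one_div_ratHeight
    (fun p hp => ⟨(hQ p hp).1.pos, (hQ p hp).2⟩) hAQ j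

end SubsetProducts

section Binomial

open Finset

lemma pow_le_pow_self_mul_choose {r n : ℕ} (hrn : r ≤ n) : n ^ r ≤ r ^ r * n.choose r := by
  have hfactor : ∀ i ∈ range r, n * (r - i) ≤ r * (n - i) := by
    intro i _
    have := Nat.mul_le_mul_right i hrn
    rw [Nat.mul_sub, Nat.mul_sub, Nat.mul_comm n r]
    omega
  refine Nat.le_of_mul_le_mul_left ?_ r.factorial_pos
  calc r.factorial * n ^ r = ∏ i ∈ range r, n * (r - i) := by
        rw [prod_mul_distrib, prod_const, card_range, ← Nat.descFactorial_eq_prod_range,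
          Nat.descFactorial_self, mul_comm]
    _ ≤ ∏ i ∈ range r, r * (n - i) := prod_le_prod' hfactor
    _ = r.factorial * (r ^ r * n.choose r) := by
        rw [prod_mul_distrib, prod_const, card_range, ← Nat.descFactorial_eq_prod_range,
          Nat.descFactorial_eq_factorial_mul_choose, mul_left_comm]

lemma pow_le_choose_mul_choose {c j r m : ℕ} (hjr : j ≤ r) (hjm : j ≤ m)
    (h : c * j ^ 2 ≤ r * m) : c ^ j ≤ r.choose j * m.choose j := by
  rcases Nat.eq_zero_or_pos j with rfl | hj
  · simp
  refine Nat.le_of_mul_le_mul_left ?_ (show 0 < (j ^ 2) ^ j by positivity)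
  calc (j ^ 2) ^ j * c ^ j = (c * j ^ 2) ^ j := by rw [mul_pow, mul_comm]
    _ ≤ (r * m) ^ j := Nat.pow_le_pow_left h j
    _ = r ^ j * m ^ j := mul_pow _ _ _
    _ ≤ (j ^ j * r.choose j) * (j ^ j * m.choose j) :=
        Nat.mul_le_mul (pow_le_pow_self_mul_choose hjr) (pow_le_pow_self_mul_choose hjm)
    _ = (j ^ 2) ^ j * (r.choose j * m.choose j) := by rw [pow_two, mul_pow]; ring

lemma choose_succ_le_two_mul_choose {r n : ℕ} (hrn : 2 * r ≤ n + 1) :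
    (n + 1).choose r ≤ 2 * n.choose r := by
  refine Nat.le_of_mul_le_mul_right ?_ n.succ_pos
  calc (n + 1).choose r * (n + 1) ≤ (n + 1).choose r * (2 * (n + 1 - r)) :=
        Nat.mul_le_mul_left _ (by omega)
    _ = 2 * ((n + 1).choose r * (n + 1 - r)) := by ring
    _ = 2 * n.choose r * (n + 1) := by rw [← Nat.choose_mul_succ_eq, mul_assoc]

lemma exists_choose_le_le_two_mul_choose {k r : ℕ} (hr : 0 < r) (hk : 4 ^ r ≤ k) :
    ∃ n, 2 * r ≤ n ∧ n.choose r ≤ k ∧ k ≤ 2 * n.choose r := by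
  have hlarge : ∃ m, 2 * r ≤ m ∧ k < (m + 1).choose r := by
    refine ⟨(k + 2) * r, by gcongr; omega, ?_⟩
    have hpow : (k + 2) ^ r ≤ ((k + 2) * r).choose r := by
      refine Nat.le_of_mul_le_mul_left ?_ (pow_pos hr r)
      rw [mul_comm, ← mul_pow]
      exact pow_le_pow_self_mul_choose (Nat.le_mul_of_pos_left r (by omega))
    calc k < k + 2 := by omega
      _ ≤ (k + 2) ^ r := Nat.le_self_pow hr.ne' _
      _ ≤ ((k + 2) * r).choose r := hpow
      _ ≤ ((k + 2) * r + 1).choose r := Nat.choose_le_choose r (Nat.le_succ _)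
  obtain ⟨hn, hlt⟩ := Nat.find_spec hlarge
  refine ⟨Nat.find hlarge, hn, ?_, hlt.le.trans (choose_succ_le_two_mul_choose (by omega))⟩
  rcases hn.eq_or_lt with heq | hgt
  · rw [← heq, ← Nat.centralBinom_eq_two_mul_choose]
    exact (Nat.centralBinom_le_four_pow r).trans hk
  · have hmin := Nat.find_min hlarge (m := Nat.find hlarge - 1) (by omega)
    rw [Nat.sub_add_cancel (by omega), not_and, not_lt] at hmin
    exact hmin (by omega)

end Binomial

section Primes

open Finset

lemma two_pow_le_mul_primeCounting (t : ℕ) : 2 ^ t ≤ t * Nat.primeCounting (2 ^ t) + t + 1 := by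
  rcases Nat.eq_zero_or_pos t with rfl | ht
  · simp
  have hlog2 : 0 < Real.log 2 := Real.log_pos one_lt_two
  have hchebyshev := Chebyshev.pi_ge (2 ^ t)
  push_cast at hchebyshev
  rw [Real.log_pow, div_le_iff₀ (by positivity)] at hchebyshev
  have hlog : Real.log ((2 : ℝ) ^ t + 1) ≤ (t + 1) * Real.log 2 := by
    have hle : (2 : ℝ) ^ t + 1 ≤ 2 ^ (t + 1) := by
      rw [pow_succ]
      linarith [one_le_pow₀ (one_le_two (α := ℝ)) (n := t)]
    simpa using Real.log_le_log (by positivity) hle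
  have hmul : (2 : ℝ) ^ t * Real.log 2 ≤
      (t * Nat.primeCounting (2 ^ t) + t + 1) * Real.log 2 := by linarith
  exact_mod_cast le_of_mul_le_mul_right hmul hlog2

lemma exists_le_primeCounting_two_pow {n : ℕ} (hn : 0 < n) :
    ∃ t, n ≤ Nat.primeCounting (2 ^ t) ∧ 2 ^ t ≤ 2 * t * n := by
  have hlarge : ∃ t, n ≤ Nat.primeCounting (2 ^ t) := by
    obtain ⟨s, hs⟩ := (Filter.tendsto_atTop.mp Nat.tendsto_primeCounting n).exists
    exact ⟨s, hs.trans (Nat.monotone_primeCounting Nat.lt_two_pow_self.le)⟩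
  refine ⟨Nat.find hlarge, Nat.find_spec hlarge, ?_⟩
  cases hfind : Nat.find hlarge with
  | zero =>
    have := Nat.find_spec hlarge
    simp only [hfind, pow_zero, Nat.primeCounting_one] at this
    omega
  | succ s =>
    have hmin : Nat.primeCounting (2 ^ s) + 1 ≤ n :=
      Nat.lt_of_not_le (Nat.find_min hlarge (by omega))
    calc 2 ^ (s + 1) = 2 * 2 ^ s := by ring
      _ ≤ 2 * (s * (Nat.primeCounting (2 ^ s) + 1) + 1) := by
          linarith [two_pow_le_mul_primeCounting s]
      _ ≤ 2 * (s * n + n) := by gcongr; omega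
      _ = 2 * (s + 1) * n := by ring

lemma exists_primes_card_eq {n P : ℕ} (h : n ≤ Nat.primeCounting P) :
    ∃ Q : Finset ℕ, (∀ p ∈ Q, p.Prime ∧ p ≤ P) ∧ #Q = n := by
  rw [← Nat.primesLE_card_eq_primeCounting] at h
  obtain ⟨Q, hQ, hcard⟩ := exists_subset_card_eq h
  exact ⟨Q, fun p hp => (Nat.mem_primesLE.mp (hQ hp)).symm, hcard⟩

end Primes

section Construction

open Finset

lemma four_pow_le_choose_mul_choose_div {n r t j : ℕ} (hrn : 2 * r ≤ n)
    (ht : 2 ^ t ≤ 2 * t * n) (hj : 16 * t * j ^ 2 ≤ r) :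
    (4 : ℝ) ^ j ≤ (r.choose j * (n - r).choose j : ℝ) / ((2 ^ t : ℕ) : ℝ) ^ j := by
  have ht0 : 0 < t := Nat.pos_of_ne_zero fun h => by simp [h] at ht
  have hjr : j ≤ r := by nlinarith
  have hprod : 4 * 2 ^ t * j ^ 2 ≤ r * (n - r) := by
    refine Nat.le_of_mul_le_mul_left ?_ two_pos
    calc 2 * (4 * 2 ^ t * j ^ 2) ≤ 2 * (4 * (2 * t * n) * j ^ 2) := by gcongr
      _ = (16 * t * j ^ 2) * n := by ring
      _ ≤ r * (2 * (n - r)) := Nat.mul_le_mul hj (by omega)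
      _ = 2 * (r * (n - r)) := by ring
  rw [le_div_iff₀ (by positivity), ← mul_pow]
  exact_mod_cast pow_le_choose_mul_choose hjr (by omega) hprod

lemma exists_le_inverseHeightSum {k U n r t j : ℕ} (hkU : k ≤ U) (hrn : 2 * r ≤ n)
    (hnk : n.choose r ≤ k) (hkn : k ≤ 2 * n.choose r) (hπ : n ≤ Nat.primeCounting (2 ^ t))
    (ht : 2 ^ t ≤ 2 * t * n) (hU : (2 ^ t) ^ r ≤ U) (hj : 16 * t * j ^ 2 ≤ r) :
    ∃ X ⊆ Icc 1 U, #X = k ∧ k * ((4 : ℝ) ^ j / 2) ≤ inverseHeightSum X := by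
  obtain ⟨Q, hQ, rfl⟩ := exists_primes_card_eq hπ
  have hcard : #(subsetProducts Q r) = (#Q).choose r :=
    card_subsetProducts fun p hp => (hQ p hp).1
  have hsubset : subsetProducts Q r ⊆ Icc 1 U :=
    (subsetProducts_subset_Icc fun p hp => ⟨(hQ p hp).1.pos, (hQ p hp).2⟩).trans
      (Icc_subset_Icc_right hU)
  obtain ⟨X, hsub, hXU, hXk⟩ := exists_subsuperset_card_eq hsubset (hcard.trans_le hnk)
    (by simpa using hkU)
  refine ⟨X, hXU, hXk, ?_⟩
  have hkn' : (k : ℝ) ≤ 2 * (#Q).choose r := mod_cast hkn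
  calc k * ((4 : ℝ) ^ j / 2) ≤ 2 * (#Q).choose r * ((4 : ℝ) ^ j / 2) := by gcongr
    _ = (#Q).choose r * (4 : ℝ) ^ j := by ring
    _ ≤ (#Q).choose r * ((r.choose j * (#Q - r).choose j : ℝ) / ((2 ^ t : ℕ) : ℝ) ^ j) := by
        gcongr
        exact four_pow_le_choose_mul_choose_div hrn ht hj
    _ ≤ inverseHeightSum (subsetProducts Q r) := le_inverseHeightSum_subsetProducts hQ j
    _ ≤ inverseHeightSum X := inverseHeightSum_mono hsub

end Construction
section GrowthRate

open Real Filter Topology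

/-- The quantity under the square root in the theorem, in terms of `K = log k` and `L = log U`. -/
noncomputable def growthRate (K L : ℝ) : ℝ := min (K / logb 2 K) (L / logb 2 L ^ 2)

/-- The order of magnitude of the number of prime factors used for the elements of the extremal
set, in terms of `K = log k` and `L = log U`. -/
noncomputable def factorScale (K L : ℝ) : ℝ := min K (L / logb 2 L)

lemma logb_two_le_self {x : ℝ} (hx : 0 < x) : logb 2 x ≤ x := by
  rcases le_total x 1 with hx1 | hx1
  · exact (logb_nonpos one_lt_two hx.le hx1).trans hx.le
  · rw [logb_le_iff_le_rpow one_lt_two hx]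
    have hbernoulli := one_add_mul_self_le_rpow_one_add (s := 1) (by norm_num) hx1
    norm_num at hbernoulli
    linarith

lemma four_le_logb_two {x : ℝ} (hx : 16 ≤ x) : 4 ≤ logb 2 x := by
  rw [le_logb_iff_rpow_le one_lt_two (by linarith)]
  exact (show (2 : ℝ) ^ (4 : ℝ) = 16 by norm_num).trans_le hx

lemma tendsto_div_logb_two_sq_atTop : Tendsto (fun x : ℝ => x / logb 2 x ^ 2) atTop atTop := by
  have hzero : Tendsto (fun x : ℝ => log x ^ 2 / x) atTop (𝓝[>] 0) := by
    refine tendsto_nhdsWithin_iff.mpr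
      ⟨by simpa using tendsto_pow_log_div_mul_add_atTop 1 0 2 one_ne_zero, ?_⟩
    filter_upwards [eventually_gt_atTop 1] with x hx
    have := log_pos hx
    exact Set.mem_Ioi.mpr (by positivity)
  refine (hzero.inv_tendsto_nhdsGT_zero.const_mul_atTop
    (show 0 < log 2 ^ 2 by positivity)).congr fun x => ?_
  rw [Pi.inv_apply, inv_div, logb, div_pow, div_div_eq_mul_div]
  ring

lemma eventually_forall_le_growthRate (C : ℝ) :
    ∀ᶠ K in atTop, ∀ L, K ≤ L → C ≤ growthRate K L := by
  filter_upwards [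
    eventually_forall_ge_atTop.mpr (tendsto_div_logb_two_sq_atTop.eventually_ge_atTop C),
    eventually_ge_atTop 16] with K hC hK L hKL
  have hlog := four_le_logb_two hK
  refine le_min ((hC K le_rfl).trans ?_) (hC L hKL)
  exact div_le_div_of_nonneg_left (by linarith) (by linarith) (by nlinarith)

variable {K L : ℝ}

lemma growthRate_nonneg (hK : 1 ≤ K) (hL : 1 ≤ L) : 0 ≤ growthRate K L :=
  le_min (div_nonneg (by linarith) (logb_nonneg one_lt_two hK))
    (div_nonneg (by linarith) (sq_nonneg _))

lemma growthRate_mul_logb_le_factorScale (hK : 16 ≤ K) (hKL : K ≤ L) :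
    growthRate K L * logb 2 K ≤ factorScale K L := by
  have hlogK := four_le_logb_two hK
  have hlogKL : logb 2 K ≤ logb 2 L := logb_le_logb_of_le one_lt_two (by linarith) hKL
  have hlogL : 0 < logb 2 L := by linarith
  refine le_min ((le_div_iff₀ (by linarith)).mp (min_le_left _ _)) ?_
  calc growthRate K L * logb 2 K ≤ L / logb 2 L ^ 2 * logb 2 L :=
        mul_le_mul (min_le_right _ _) hlogKL (by linarith)
          (div_nonneg (by linarith) (sq_nonneg _))
    _ = L / logb 2 L := by field_simp

lemma growthRate_le_factorScale (hK : 16 ≤ K) (hKL : K ≤ L) :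
    growthRate K L ≤ factorScale K L := by
  have hlogK := four_le_logb_two hK
  have hlogL := four_le_logb_two (hK.trans hKL)
  refine le_min ((min_le_left _ _).trans (div_le_self (by linarith) (by linarith)))
    ((min_le_right _ _).trans ?_)
  exact div_le_div_of_nonneg_left (by linarith) (by linarith) (by nlinarith)

lemma mul_growthRate_le_factorScale_sq (hK : 16 ≤ K) (hKL : K ≤ L) :
    K * growthRate K L ≤ factorScale K L ^ 2 := by
  have hlogK := four_le_logb_two hK
  rcases min_choice K (L / logb 2 L) with h | h <;> rw [factorScale, h]
  · calc K * growthRate K L ≤ K * K := by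
          gcongr
          exact (min_le_left _ _).trans (div_le_self (by linarith) (by linarith))
      _ = K ^ 2 := (sq K).symm
  · calc K * growthRate K L ≤ L * (L / logb 2 L ^ 2) :=
          mul_le_mul hKL (min_le_right _ _) (growthRate_nonneg (by linarith) (by linarith))
            (by linarith)
      _ = (L / logb 2 L) ^ 2 := by ring

end GrowthRate

section Parameters

open Real

variable {K L δ : ℝ} {k n r t U : ℕ}

lemma mul_logb_le_of_choose_le (hr : 0 < r) (hrn : r ≤ n) (hnk : n.choose r ≤ k) :
    r * logb 2 n ≤ r * logb 2 r + logb 2 k := by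
  have hn : 0 < n := hr.trans_le hrn
  have hk : 0 < k := (Nat.choose_pos hrn).trans_le hnk
  have hpow : (n : ℝ) ^ r ≤ (r : ℝ) ^ r * k :=
    mod_cast (pow_le_pow_self_mul_choose hrn).trans (Nat.mul_le_mul_left _ hnk)
  have hlog := logb_le_logb_of_le one_lt_two (by positivity) hpow
  rwa [logb_mul (by positivity) (by positivity), logb_pow, logb_pow] at hlog

lemma le_one_add_logb_add_logb (ht : 2 ^ t ≤ 2 * t * n) :
    (t : ℝ) ≤ 1 + logb 2 t + logb 2 n := by
  have hpos : 0 < 2 * t * n := (by positivity : 0 < 2 ^ t).trans_le ht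
  have htpos : t ≠ 0 := by rintro rfl; simp at hpos
  have hnpos : n ≠ 0 := by rintro rfl; simp at hpos
  have hlog := logb_le_logb_of_le one_lt_two (by positivity)
    (show (2 : ℝ) ^ t ≤ 2 * t * n from mod_cast ht)
  rwa [logb_mul (by positivity) (by positivity), logb_mul (by positivity) (by positivity),
    logb_pow, logb_self_eq_one one_lt_two, mul_one] at hlog

lemma le_four_add_two_mul_logb (ht : 2 ^ t ≤ 2 * t * n) : (t : ℝ) ≤ 4 + 2 * logb 2 n := by
  have htpos : (0 : ℝ) < t := Nat.cast_pos.mpr (Nat.pos_of_ne_zero fun h => by simp [h] at ht)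
  have hhalf := logb_two_le_self (half_pos htpos)
  rw [logb_div htpos.ne' two_ne_zero, logb_self_eq_one one_lt_two] at hhalf
  linarith [le_one_add_logb_add_logb ht]

lemma mul_le_of_le_div_logb (hK : 16 ≤ K) (hKL : K ≤ L) (hδL : K + δ * L ≤ L) (hr : 0 < r)
    (hrK : r ≤ K) (hrL : r ≤ δ / 3 * (L / logb 2 L))
    (hn : r * logb 2 n ≤ r * logb 2 r + K) (ht : 2 ^ t ≤ 2 * t * n) : (t : ℝ) * r ≤ L := by
  have hr1 : (1 : ℝ) ≤ r := mod_cast hr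
  have htpos : (0 : ℝ) < t := Nat.cast_pos.mpr (Nat.pos_of_ne_zero fun h => by simp [h] at ht)
  have hlogL := four_le_logb_two (hK.trans hKL)
  have hlogn : logb 2 n ≤ logb 2 r + K := by
    refine le_of_mul_le_mul_left ?_ (one_pos.trans_le hr1)
    nlinarith
  have htL : (t : ℝ) ≤ 8 * L := by
    linarith [le_four_add_two_mul_logb ht, logb_two_le_self (one_pos.trans_le hr1)]
  have hlogt : logb 2 t ≤ 3 + logb 2 L := by
    have hlog := logb_le_logb_of_le one_lt_two htpos htL
    rwa [show (8 : ℝ) * L = 2 ^ 3 * L by norm_num, logb_mul (by norm_num) (by linarith),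
      logb_pow, logb_self_eq_one one_lt_two, mul_one] at hlog
  have hlogr : logb 2 r ≤ logb 2 L := logb_le_logb_of_le one_lt_two (by linarith) (by linarith)
  calc (t : ℝ) * r ≤ (1 + logb 2 t + logb 2 n) * r := by
        gcongr
        exact le_one_add_logb_add_logb ht
    _ ≤ r * (1 + logb 2 t + logb 2 r) + K := by linarith
    _ ≤ r * (3 * logb 2 L) + K := by gcongr; linarith
    _ ≤ δ / 3 * (L / logb 2 L) * (3 * logb 2 L) + K := by gcongr
    _ = K + δ * L := by field_simp; ring
    _ ≤ L := hδL

lemma mul_growthRate_le (hK : 16 ≤ K) (hKL : K ≤ L) (hδ : 0 < δ) (hδ1 : δ ≤ 1) (hr : 0 < r)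
    (hrs : δ / 6 * factorScale K L ≤ r) (hrK : r ≤ K)
    (hn : r * logb 2 n ≤ r * logb 2 r + K) (ht : 2 ^ t ≤ 2 * t * n) :
    t * growthRate K L ≤ 100 / δ ^ 2 * r := by
  have hr0 : (0 : ℝ) < r := mod_cast hr
  have hM := growthRate_nonneg (show 1 ≤ K by linarith) (show 1 ≤ L by linarith)
  have hlogK := four_le_logb_two hK
  have hlogr : logb 2 r ≤ logb 2 K := logb_le_logb_of_le one_lt_two hr0 hrK
  have hs : factorScale K L ≤ 6 / δ * r := by
    rw [div_mul_eq_mul_div, le_div_iff₀ hδ]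
    linarith
  have hs0 : 0 ≤ factorScale K L := hM.trans (growthRate_le_factorScale hK hKL)
  have hrt : r * t ≤ 3 * r * logb 2 K + 2 * K :=
    calc (r : ℝ) * t ≤ r * (4 + 2 * logb 2 n) := by
          gcongr
          exact le_four_add_two_mul_logb ht
      _ ≤ r * (4 + 2 * logb 2 r) + 2 * K := by linarith
      _ ≤ r * (3 * logb 2 K) + 2 * K := by gcongr; linarith
      _ = 3 * r * logb 2 K + 2 * K := by ring
  have hδsq : 1 / δ ≤ 1 / δ ^ 2 := one_div_le_one_div_of_le (by positivity) (by nlinarith)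
  refine le_of_mul_le_mul_left ?_ hr0
  calc r * (t * growthRate K L) = r * t * growthRate K L := by ring
    _ ≤ (3 * r * logb 2 K + 2 * K) * growthRate K L := by gcongr
    _ = 3 * r * (growthRate K L * logb 2 K) + 2 * (K * growthRate K L) := by ring
    _ ≤ 3 * r * factorScale K L + 2 * factorScale K L ^ 2 := by
        gcongr
        · exact growthRate_mul_logb_le_factorScale hK hKL
        · exact mul_growthRate_le_factorScale_sq hK hKL
    _ ≤ 3 * r * (6 / δ * r) + 2 * (6 / δ * r) ^ 2 := by gcongr
    _ = (18 * (1 / δ) + 72 * (1 / δ ^ 2)) * r ^ 2 := by ring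
    _ ≤ 100 * (1 / δ ^ 2) * r ^ 2 := by
        gcongr
        linarith [show 0 < 1 / δ ^ 2 by positivity]
    _ = r * (100 / δ ^ 2 * r) := by ring

lemma two_pow_le_of_le_logb {m : ℕ} (hk : 0 < k) (h : (m : ℝ) ≤ logb 2 k) : 2 ^ m ≤ k := by
  rw [le_logb_iff_rpow_le one_lt_two (mod_cast hk), rpow_natCast] at h
  exact_mod_cast h

lemma exists_nat_half_le_le {x : ℝ} (hx : 1 ≤ x) : ∃ m : ℕ, 0 < m ∧ x / 2 ≤ m ∧ m ≤ x :=
  ⟨⌊x⌋₊, Nat.floor_pos.mpr hx, (Nat.div_two_lt_floor hx).le, Nat.floor_le (by linarith)⟩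

lemma exists_sqrt_div_le_of_mul_le (ht : 0 < t) (hrt : 16 * t ≤ r) :
    ∃ j : ℕ, 0 < j ∧ 16 * t * j ^ 2 ≤ r ∧ √(r / t) / 8 ≤ j := by
  have ht0 : (0 : ℝ) < t := mod_cast ht
  have hrt' : (4 : ℝ) ^ 2 * t ≤ r := mod_cast hrt
  have hone : 1 ≤ √(r / t : ℝ) / 4 := by
    rw [one_le_div (by norm_num)]
    exact le_sqrt_of_sq_le ((le_div_iff₀ ht0).mpr hrt')
  obtain ⟨j, hj, hj_ge, hj_le⟩ := exists_nat_half_le_le hone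
  have hjr : (16 * t * j ^ 2 : ℝ) ≤ r :=
    calc (16 * t * j ^ 2 : ℝ) ≤ 16 * t * (√(r / t) / 4) ^ 2 := by gcongr
      _ = r := by
          rw [div_pow, sq_sqrt (by positivity)]
          field_simp
          ring
  exact ⟨j, hj, mod_cast hjr, by linarith⟩

lemma exp_log_two_mul_le_four_pow_div_two {w : ℝ} {j : ℕ} (hj : 0 < j) (hw : w ≤ j) :
    exp (log 2 * w) ≤ 4 ^ j / 2 :=
  calc exp (log 2 * w) ≤ exp (log 2 * j) := by gcongr
    _ = 2 ^ j := by rw [mul_comm, exp_nat_mul, exp_log two_pos]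
    _ ≤ 2 ^ j * 2 ^ j / 2 := by
        have h2 : (2 : ℝ) ≤ 2 ^ j := le_self_pow₀ one_le_two hj.ne'
        nlinarith
    _ = 4 ^ j / 2 := by rw [← mul_pow]; norm_num

lemma mul_sqrt_le_sqrt_div_div {M : ℝ} (hδ : 0 < δ) (ht : 0 < t)
    (h : t * M ≤ 100 / δ ^ 2 * r) : δ / 80 * √M ≤ √(r / t) / 8 := by
  have ht0 : (0 : ℝ) < t := mod_cast ht
  have hratio : M ≤ (10 / δ) ^ 2 * (r / t) := by
    rw [← mul_div_assoc, le_div_iff₀ ht0]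
    linarith [show (10 / δ) ^ 2 * r = 100 / δ ^ 2 * r by ring]
  calc δ / 80 * √M ≤ δ / 80 * √((10 / δ) ^ 2 * (r / t)) := by gcongr
    _ = δ / 80 * (10 / δ * √(r / t)) := by rw [sqrt_mul (by positivity), sqrt_sq (by positivity)]
    _ = √(r / t) / 8 := by field_simp; ring

lemma exists_choose_primeCounting_parameters (hδ : 0 < δ) (hδ1 : δ ≤ 1)
    (hK : 16 ≤ logb 2 k) (hKL : logb 2 k ≤ logb 2 U)
    (hδL : logb 2 k + δ * logb 2 U ≤ logb 2 U)
    (hs : 3 / δ ≤ factorScale (logb 2 k) (logb 2 U)) :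
    ∃ n r t : ℕ, 2 * r ≤ n ∧ n.choose r ≤ k ∧ k ≤ 2 * n.choose r ∧
      n ≤ Nat.primeCounting (2 ^ t) ∧ 2 ^ t ≤ 2 * t * n ∧ (2 ^ t) ^ r ≤ U ∧
      t * growthRate (logb 2 k) (logb 2 U) ≤ 100 / δ ^ 2 * r := by
  have hk : 0 < k := Nat.pos_of_ne_zero fun h => by norm_num [h] at hK
  have hU : 0 < U := Nat.pos_of_ne_zero fun h => by norm_num [h] at hKL; linarith
  have hone : 1 ≤ δ / 3 * factorScale (logb 2 k) (logb 2 U) := by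
    rw [div_le_iff₀ hδ] at hs
    linarith
  obtain ⟨r, hr, hr_ge, hr_le⟩ := exists_nat_half_le_le hone
  have hrK : 3 * (r : ℝ) ≤ logb 2 k := by
    have hsK : factorScale (logb 2 k) (logb 2 U) ≤ logb 2 k := min_le_left _ _
    nlinarith
  have hrL : (r : ℝ) ≤ δ / 3 * (logb 2 U / logb 2 (logb 2 U)) :=
    hr_le.trans (by gcongr; exact min_le_right _ _)
  have h4r : 4 ^ r ≤ k := by
    rw [show 4 = 2 ^ 2 by norm_num, ← pow_mul]
    refine two_pow_le_of_le_logb hk ?_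
    push_cast
    linarith
  obtain ⟨n, hrn, hnk, hkn⟩ := exists_choose_le_le_two_mul_choose hr h4r
  obtain ⟨t, hπ, ht⟩ := exists_le_primeCounting_two_pow (show 0 < n by omega)
  have hlogn := mul_logb_le_of_choose_le hr (by omega) hnk
  have htrU : (2 ^ t) ^ r ≤ U := by
    rw [← pow_mul]
    refine two_pow_le_of_le_logb hU ?_
    push_cast
    exact mul_le_of_le_div_logb hK hKL hδL hr (by linarith) hrL hlogn ht
  exact ⟨n, r, t, hrn, hnk, hkn, hπ, ht, htrU,
    mul_growthRate_le hK hKL hδ hδ1 hr (by linarith) (by linarith) hlogn ht⟩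

theorem exists_exp_sqrt_growthRate_le_inverseHeightSum (hδ : 0 < δ)
    (hK : 16 ≤ logb 2 k) (hδL : logb 2 k + δ * logb 2 U ≤ logb 2 U)
    (hM : 1600 / δ ^ 2 ≤ growthRate (logb 2 k) (logb 2 U)) :
    ∃ X ⊆ Finset.Icc 1 U, X.card = k ∧
      k * exp (log 2 * (δ / 80 * √(growthRate (logb 2 k) (logb 2 U)))) ≤ inverseHeightSum X := by
  have hk : 0 < k := Nat.pos_of_ne_zero fun h => by norm_num [h] at hK
  have hU : 0 < U := Nat.pos_of_ne_zero fun h => by norm_num [h] at hδL; linarith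
  have hL : 0 ≤ logb 2 U := logb_nonneg one_lt_two (mod_cast hU)
  have hKL : logb 2 k ≤ logb 2 U := by linarith [mul_nonneg hδ.le hL]
  have hkU : k ≤ U :=
    mod_cast (logb_le_logb one_lt_two (mod_cast hk) (mod_cast hU)).mp hKL
  have hδ1 : δ ≤ 1 := by nlinarith
  have hs : 3 / δ ≤ factorScale (logb 2 k) (logb 2 U) := by
    refine le_trans ?_ (hM.trans (growthRate_le_factorScale hK hKL))
    rw [div_le_div_iff₀ hδ (by positivity)]
    nlinarith
  obtain ⟨n, r, t, hrn, hnk, hkn, hπ, ht, htrU, htM⟩ :=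
    exists_choose_primeCounting_parameters hδ hδ1 hK hKL hδL hs
  have htpos : 0 < t := Nat.pos_of_ne_zero fun h => by simp [h] at ht
  have h16t : (16 * t : ℝ) ≤ r := by
    refine le_of_mul_le_mul_left ?_ (show 0 < 100 / δ ^ 2 by positivity)
    calc 100 / δ ^ 2 * (16 * t) = t * (1600 / δ ^ 2) := by ring
      _ ≤ t * growthRate (logb 2 k) (logb 2 U) := by gcongr
      _ ≤ 100 / δ ^ 2 * r := htM
  obtain ⟨j, hj, hjr, hj_ge⟩ := exists_sqrt_div_le_of_mul_le htpos (mod_cast h16t)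
  obtain ⟨X, hXU, hXk, hX⟩ := exists_le_inverseHeightSum hkU hrn hnk hkn hπ ht htrU hjr
  refine ⟨X, hXU, hXk, le_trans ?_ hX⟩
  gcongr
  exact exp_log_two_mul_le_four_pow_div_two hj
    ((mul_sqrt_le_sqrt_div_div hδ htpos htM).trans hj_ge)

end Parameters

/-- Lower bound on the sum of inverse heights. For every `ε > 0` there
are `c > 0` and `k₀` such that for all `k ≥ k₀` and `U ≥ k^{1+ε}` there is a set `X` of
exactly `k` positive integers, `X ⊆ {1, …, U}`, with
`∑_{x ∈ X} ∑_{y ∈ X} 1/H(x/y) ≥ k · exp(c·√(min(log k/log log k, log U/(log log U)²)))`. -/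
theorem stmt_16 : ∀ ε : ℝ, 0 < ε → ∃ c : ℝ, 0 < c ∧ ∃ k₀ : ℕ, ∀ k : ℕ, k₀ ≤ k →
    ∀ U : ℕ, (k : ℝ) ^ ((1 : ℝ) + ε) ≤ U →
    ∃ X : Finset ℕ, X ⊆ Finset.Icc 1 U ∧ X.card = k ∧
      (k : ℝ) * Real.exp (c * Real.sqrt (min
          (Real.logb 2 k / Real.logb 2 (Real.logb 2 k))
          (Real.logb 2 U / (Real.logb 2 (Real.logb 2 U)) ^ 2)))
      ≤ ∑ x ∈ X, ∑ y ∈ X, (1 : ℝ) / (ratHeight ((x : ℚ) / (y : ℚ)) : ℝ) := by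
  intro ε hε
  set δ : ℝ := ε / (1 + ε) with hδ
  have hδpos : 0 < δ := by positivity
  have hlogk : Filter.Tendsto (fun k : ℕ => Real.logb 2 k) Filter.atTop Filter.atTop :=
    (Real.tendsto_logb_atTop one_lt_two).comp tendsto_natCast_atTop_atTop
  obtain ⟨k₀, hk₀⟩ := Filter.eventually_atTop.mp (hlogk.eventually
    ((eventually_forall_le_growthRate (1600 / δ ^ 2)).and (Filter.eventually_ge_atTop 16)))
  refine ⟨Real.log 2 * (δ / 80), by positivity, k₀, fun k hk U hU => ?_⟩
  obtain ⟨hM, hK⟩ := hk₀ k hk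
  have hkpos : (0 : ℝ) < k := Nat.cast_pos.mpr (Nat.pos_of_ne_zero fun h => by norm_num [h] at hK)
  have hKL : (1 + ε) * Real.logb 2 k ≤ Real.logb 2 U := by
    rw [← Real.logb_rpow_eq_mul_logb_of_pos hkpos]
    exact Real.logb_le_logb_of_le one_lt_two (by positivity) hU
  have hδL : Real.logb 2 k + δ * Real.logb 2 U ≤ Real.logb 2 U := by
    rw [hδ]
    field_simp
    linarith
  rw [mul_assoc]
  exact exists_exp_sqrt_growthRate_le_inverseHeightSum hδpos hK hδL (hM _ (by nlinarith))
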